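/- Let m ≥ 1 be an integer and set w = m − n/2. Let U ⊆ ℝ^{n+2} ∖ {0} be an open cone. Suppose (s̃, l̃) and (s̃′, l̃′) are two pairs of smooth functions on U with X s̃ = w s̃, X s̃′ = w s̃′, X l̃ = (w − 2m) l̃, and X l̃′ = (w − 2m) l̃′ on U, such that s̃ = s̃′ at every point of N ∩ U, Δ̃l̃ and Δ̃l̃′ vanish to infinite order at every point of N ∩ U, and Δ̃s̃ + 4m Q^{m−1} l̃ and Δ̃s̃′ + 4m Q^{m−1} l̃′ vanish to infinite order at every point of N ∩ U. Then l̃ − l̃′ vanishes to infinite order at every point of N ∩ U, and there exists a smooth function g on U with Xg = (w − 2m) g on U and Δ̃g vanishing to infinite order at every point of N ∩ U, such that s̃ − s̃′ − Q^m g vanishes to infinite order at every point of N ∩ U. (The log coefficient is unique to infinite order, and the smooth part is unique modulo Q^m times a homogeneous harmonic jet.) -/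

import Mathlib

/-! Write `n = p + q`, and let `f` and `l` be the differences of the two smooth parts and of the two log
coefficients. By linearity `f` is homogeneous of degree `m - n/2` and vanishes on the null cone,
`l` is homogeneous of degree `-m - n/2`, and both `Δ̃l` and `Δ̃f + 4m Q^{m-1} l` are flat (vanish to infinite order) along the null cone.

The analytic input is that a smooth function on `U` vanishing on the null cone is `Q` times a smooth
function (`exists_div`). Since `dQ ≠ 0` on the cone, it follows that a function is flat once it is
divisible by every power of `Q` (`flatOn_of_forall_dvd`), that `h` vanishes on the cone if `Q^j h` is
flat (`FlatOn.eq_zero_of_pow_mul`), and hence that `Q^j` can be cancelled from flat functions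
(`FlatOn.of_pow_mul`).

The algebraic input is the formula (`laplt_pow_mul`), for `g` homogeneous of degree `a - 2k`,
`Δ̃(Q^k g) = Q^k Δ̃g + 4k (a + n/2 - k) Q^{k-1} g`. Whenever the factor `a + n/2 - k` is nonzero,
control of `Δ̃(Q^k g)` forces `g = 0` on the cone, so one more power of `Q` splits off
(`exists_pow_div`). For `f` the factor is `m - k`, so `f = Q^m g` exactly, with `g` homogeneous. At
`k = m` the factor vanishes, and what remains is that `Q Δ̃g + 4m l` is flat; in particular `l = 0` on
the cone. For `l` the factor is `-(m + k)`, never zero, so `l` is divisible by all powers of `Q`, that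
is, flat. Then `Q Δ̃g` is flat, and so is `Δ̃g`. -/

open Matrix

noncomputable section

abbrev Idx (p q : ℕ) : Type := Unit ⊕ (Fin (p + q)) ⊕ Unit

/-- The diagonal quadratic form of signature `(p,q)` on `ℝ^n`, `n = p + q`. -/
def hMat (p q : ℕ) : Matrix (Fin (p + q)) (Fin (p + q)) ℝ :=
  Matrix.diagonal fun i => if (i : ℕ) < p then (1 : ℝ) else -1

/-- The quadratic form of signature `(p+1,q+1)` on `ℝ^{n+2}`, in block form
`[[0,0,1],[0,h,0],[1,0,0]]`. -/
def htMat (p q : ℕ) : Matrix (Idx p q) (Idx p q) ℝ :=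
  Matrix.of fun I J =>
    match I, J with
    | Sum.inl _, Sum.inr (Sum.inr _) => (1 : ℝ)
    | Sum.inr (Sum.inr _), Sum.inl _ => 1
    | Sum.inr (Sum.inl i), Sum.inr (Sum.inl j) => hMat p q i j
    | _, _ => 0

/-- `Q(x) = Σ h̃_{IJ} x^I x^J`. -/
def QForm (p q : ℕ) (x : Idx p q → ℝ) : ℝ := ∑ I, ∑ J, htMat p q I J * x I * x J

/-- The partial derivative `∂_I f`. -/
def pderiv (p q : ℕ) (I : Idx p q) (f : (Idx p q → ℝ) → ℝ) : (Idx p q → ℝ) → ℝ :=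
  fun x => fderiv ℝ f x (Pi.single I 1)

/-- The ambient Laplacian `Δ̃f = Σ h̃^{IJ} ∂_I ∂_J f`. -/
def laplt (p q : ℕ) (f : (Idx p q → ℝ) → ℝ) : (Idx p q → ℝ) → ℝ :=
  fun x => ∑ I, ∑ J, (htMat p q)⁻¹ I J * pderiv p q I (pderiv p q J f) x

/-- The Euler operator `Xf = Σ x^I ∂_I f`. -/
def euler (p q : ℕ) (f : (Idx p q → ℝ) → ℝ) : (Idx p q → ℝ) → ℝ :=
  fun x => ∑ I, x I * pderiv p q I f x

/-- The null cone `N = {x ≠ 0 : Q(x) = 0}` of `h̃`. -/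
def nullCone (p q : ℕ) : Set (Idx p q → ℝ) := {x | x ≠ 0 ∧ QForm p q x = 0}

/-- A function vanishes to infinite order at `y` if its value and all iterated
derivatives of every order vanish at `y`. -/
def VanishesToInfOrderAt (p q : ℕ) (f : (Idx p q → ℝ) → ℝ) (y : Idx p q → ℝ) : Prop :=
  ∀ k : ℕ, iteratedFDeriv ℝ k f y = 0

/-- An open cone in `ℝ^{n+2} ∖ {0}`. -/
def IsOpenCone (p q : ℕ) (U : Set (Idx p q → ℝ)) : Prop :=
  IsOpen U ∧ (∀ x ∈ U, x ≠ 0) ∧ ∀ x ∈ U, ∀ l : ℝ, 0 < l → l • x ∈ U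

/-- The constant `c_m` with `c_m⁻¹ = (-4)^{m-1} ((m-1)!)²`. -/
def cConst (m : ℕ) : ℝ := ((-4 : ℝ) ^ (m - 1) * ((m - 1).factorial : ℝ) ^ 2)⁻¹

section

open scoped ContDiff Topology Convolution
open Set Filter

/-! ### The quadratic form and its null cone -/

/-- The symmetric bilinear form polarizing `QForm`. -/
def bilF (p q : ℕ) (x v : Idx p q → ℝ) : ℝ := ∑ I, ∑ J, htMat p q I J * x I * v J

/-- The diagonal entries of `hMat`. -/
def epsH (p q : ℕ) (i : Fin (p + q)) : ℝ := if (i : ℕ) < p then (1 : ℝ) else -1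

lemma epsH_mul_self (p q : ℕ) (i : Fin (p + q)) : epsH p q i * epsH p q i = 1 := by
  unfold epsH; split_ifs <;> norm_num

lemma bilF_eq (p q : ℕ) (x v : Idx p q → ℝ) :
    bilF p q x v = x (Sum.inl ()) * v (Sum.inr (Sum.inr ()))
      + x (Sum.inr (Sum.inr ())) * v (Sum.inl ())
      + ∑ i, epsH p q i * x (Sum.inr (Sum.inl i)) * v (Sum.inr (Sum.inl i)) := by
  simp [bilF, htMat, hMat, epsH, Matrix.diagonal_apply]
  ring

lemma QForm_eq_bilF (p q : ℕ) (x : Idx p q → ℝ) : QForm p q x = bilF p q x x := rfl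

lemma QForm_add_smul (p q : ℕ) (x v : Idx p q → ℝ) (t : ℝ) :
    QForm p q (x + t • v) = QForm p q x + 2 * t * bilF p q x v + t ^ 2 * QForm p q v := by
  simp only [QForm_eq_bilF, bilF_eq, Pi.add_apply, Pi.smul_apply, smul_eq_mul]
  have : ∀ i : Fin (p + q), epsH p q i * (x (Sum.inr (Sum.inl i)) + t * v (Sum.inr (Sum.inl i)))
      * (x (Sum.inr (Sum.inl i)) + t * v (Sum.inr (Sum.inl i)))
      = epsH p q i * x (Sum.inr (Sum.inl i)) * x (Sum.inr (Sum.inl i))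
        + 2 * t * (epsH p q i * x (Sum.inr (Sum.inl i)) * v (Sum.inr (Sum.inl i)))
        + t ^ 2 * (epsH p q i * v (Sum.inr (Sum.inl i)) * v (Sum.inr (Sum.inl i))) := by
    intro i; ring
  simp only [this, Finset.sum_add_distrib, ← Finset.mul_sum]
  ring

lemma contDiff_QForm (p q : ℕ) {k : WithTop ℕ∞} : ContDiff ℝ k (QForm p q) := by
  unfold QForm; fun_prop

lemma contDiff_bilF (p q : ℕ) (v : Idx p q → ℝ) {k : WithTop ℕ∞} :
    ContDiff ℝ k (fun x => bilF p q x v) := by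
  unfold bilF; fun_prop

lemma fderiv_QForm_apply (p q : ℕ) (x v : Idx p q → ℝ) :
    fderiv ℝ (QForm p q) x v = 2 * bilF p q x v := by
  have hd : DifferentiableAt ℝ (QForm p q) x :=
    ((contDiff_QForm p q (k := 1)).differentiable (by norm_num)) x
  rw [← hd.lineDeriv_eq_fderiv, lineDeriv]
  simp only [QForm_add_smul]
  have h : HasDerivAt (fun t : ℝ => QForm p q x + 2 * t * bilF p q x v + t ^ 2 * QForm p q v)
      (2 * bilF p q x v) 0 := by
    have h1 := (((hasDerivAt_id (0 : ℝ)).const_mul 2).mul_const (bilF p q x v)).const_add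
      (QForm p q x)
    have h2 := ((hasDerivAt_id (0 : ℝ)).pow 2).mul_const (QForm p q v)
    refine (h1.add h2).congr_deriv ?_ |>.congr_of_eventuallyEq ?_
    · simp
    · exact Filter.Eventually.of_forall fun t => by simp
  exact h.deriv

/-- Null vectors span, so every nonzero `y` pairs nontrivially with one of them. -/
lemma exists_null_dir (p q : ℕ) {y : Idx p q → ℝ} (hy : y ≠ 0) :
    ∃ v, QForm p q v = 0 ∧ bilF p q y v ≠ 0 := by
  by_cases h0 : y (Sum.inl ()) = 0
  · by_cases h1 : y (Sum.inr (Sum.inr ())) = 0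
    · obtain ⟨I, hI⟩ := Function.ne_iff.1 hy
      rcases I with ⟨⟩ | i | ⟨⟩
      · exact absurd h0 hI
      · refine ⟨Sum.elim (fun _ => 1)
          (Sum.elim (Pi.single i 1) (fun _ => - epsH p q i / 2)), ?_, ?_⟩
        · rw [QForm_eq_bilF, bilF_eq]
          simp [Pi.single_apply]
        · rw [bilF_eq]
          have := epsH_mul_self p q i
          simp only [Pi.zero_apply] at hI
          simp [Pi.single_apply, h0, h1, hI]
          intro h; simp [h] at this
      · exact absurd h1 hI
    · refine ⟨Pi.single (Sum.inl ()) 1, ?_, ?_⟩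
      · rw [QForm_eq_bilF, bilF_eq]; simp
      · rw [bilF_eq]; simpa using h1
  · refine ⟨Pi.single (Sum.inr (Sum.inr ())) 1, ?_, ?_⟩
    · rw [QForm_eq_bilF, bilF_eq]; simp
    · rw [bilF_eq]; simpa using h0

/-- The complement of the null cone accumulates at every nonzero point. -/
lemma mem_closure_QForm_ne_zero (p q : ℕ) {y : Idx p q → ℝ} (hy : y ≠ 0) :
    y ∈ closure {x | QForm p q x ≠ 0} := by
  by_cases hQ : QForm p q y = 0
  · obtain ⟨v, hv, hb⟩ := exists_null_dir p q hy
    have hc : Tendsto (fun t : ℝ => y + t • v) (𝓝[≠] 0) (𝓝 y) := by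
      have : Continuous (fun t : ℝ => y + t • v) := by fun_prop
      have h := this.tendsto 0
      simp only [zero_smul, add_zero] at h
      exact h.mono_left nhdsWithin_le_nhds
    refine mem_closure_of_tendsto hc ?_
    filter_upwards [self_mem_nhdsWithin] with t ht
    have ht' : t ≠ 0 := ht
    simp [QForm_add_smul, hQ, hv, hb, ht']
  · exact subset_closure hQ

/-- Two functions continuous at `y` that agree off the null cone near `y` agree at `y`. -/
lemma eq_of_eventually_eq_off {p q : ℕ} {y : Idx p q → ℝ} (hy : y ≠ 0)
    {f g : (Idx p q → ℝ) → ℝ} (hf : ContinuousAt f y) (hg : ContinuousAt g y)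
    (h : ∀ᶠ x in 𝓝 y, QForm p q x ≠ 0 → f x = g x) : f y = g y := by
  have hne : (𝓝[{x | QForm p q x ≠ 0}] y).NeBot :=
    mem_closure_iff_nhdsWithin_neBot.1 (mem_closure_QForm_ne_zero p q hy)
  refine tendsto_nhds_unique_of_eventuallyEq (l := 𝓝[{x | QForm p q x ≠ 0}] y)
    (hf.tendsto.mono_left nhdsWithin_le_nhds)
    (hg.tendsto.mono_left nhdsWithin_le_nhds) ?_
  exact eventually_nhdsWithin_iff.2 h

/-! ### Division by `Q` -/

/-- An integral over `[0, 1]` depending smoothly on a parameter is smooth; seen as the value at `0`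
of the convolution of the indicator of `[0, 1]` with a cut-off of `t ↦ F (x, -t)`. -/
lemma contDiffOn_intervalIntegral_param {P : Type*} [NormedAddCommGroup P] [NormedSpace ℝ P]
    {F : P × ℝ → ℝ} {s : Set P} (hs : IsOpen s)
    (hF : ContDiffOn ℝ ∞ F (s ×ˢ Metric.ball (0 : ℝ) 3)) :
    ContDiffOn ℝ ∞ (fun x => ∫ t in (0 : ℝ)..1, F (x, t)) s := by
  let χ : ContDiffBump (0 : ℝ) := ⟨1, 2, one_pos, one_lt_two⟩
  let g : P → ℝ → ℝ := fun x t => χ t * F (x, -t)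
  have hg : ContDiffOn ℝ ∞ (↿g) (s ×ˢ univ) := by
    rintro ⟨x, t⟩ ⟨hx, -⟩
    have hx : x ∈ s := hx
    apply ContDiffAt.contDiffWithinAt
    by_cases ht : |t| < 3
    · have h1 : ContDiffAt ℝ ∞ (fun z : P × ℝ => χ z.2) (x, t) :=
        ContDiffAt.comp (g := χ) (x, t) χ.contDiff.contDiffAt contDiffAt_snd
      have h2 : ContDiffAt ℝ ∞ F (x, -t) := by
        apply hF.contDiffAt
        apply (hs.prod Metric.isOpen_ball).mem_nhds
        exact ⟨hx, by simpa using ht⟩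
      have h3 : ContDiffAt ℝ ∞ (fun z : P × ℝ => F (z.1, -z.2)) (x, t) := by
        have : ContDiffAt ℝ ∞ (fun z : P × ℝ => (z.1, -z.2)) (x, t) := by fun_prop
        exact ContDiffAt.comp (x, t) h2 this
      exact h1.mul h3
    · have : (↿g) =ᶠ[𝓝 (x, t)] fun _ => (0 : ℝ) := by
        have h2 : ∀ᶠ z : P × ℝ in 𝓝 (x, t), 2 < |z.2| := by
          apply ContinuousAt.eventually_lt continuousAt_const (by fun_prop)
          show (2 : ℝ) < |t|
          linarith
        filter_upwards [h2] with z hz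
        show χ z.2 * F (z.1, -z.2) = 0
        rw [χ.zero_of_le_dist (by simpa [χ] using hz.le), zero_mul]
      exact contDiffAt_const.congr_of_eventuallyEq this
  have hf : MeasureTheory.LocallyIntegrable (indicator (Ioc (0 : ℝ) 1) (fun _ => (1 : ℝ))) := by
    apply MeasureTheory.Integrable.locallyIntegrable
    rw [MeasureTheory.integrable_indicator_iff measurableSet_Ioc]
    exact MeasureTheory.integrableOn_const (by simp)
  have key := MeasureTheory.contDiffOn_convolution_right_with_param_comp
    (ContinuousLinearMap.mul ℝ ℝ)
    (v := fun _ : P => (0 : ℝ)) contDiffOn_const (n := ⊤) hs (isCompact_closedBall (0 : ℝ) 2)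
    (g := g) (fun x t _ ht => by
      have : 2 ≤ dist t 0 := by
        have := ht; rw [Metric.mem_closedBall, not_le] at this; exact this.le
      simp only [g]
      rw [χ.zero_of_le_dist this, zero_mul]) hf hg
  refine key.congr fun x hx => ?_
  rw [MeasureTheory.convolution_def, intervalIntegral.integral_of_le zero_le_one,
    ← MeasureTheory.integral_indicator measurableSet_Ioc]
  congr 1
  ext t
  by_cases ht : t ∈ Ioc (0 : ℝ) 1
  · have : χ (-t) = 1 := χ.one_of_mem_closedBall (by
      simp [χ, abs_le]; constructor <;> linarith [ht.1, ht.2])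
    simp [ht, g, this]
  · simp [ht]

/-- Local division by `Q`. Near a point `y` of the null cone pick a null vector `v` that is not
orthogonal to `y`. Then `Q (x + t v) = Q x + 2 t B(x, v)` vanishes at `t = τ x = -Q x / (2 B(x, v))`,
so integrating `∂_v f` from `x` to `x + τ x • v`, where `f` vanishes, writes `f x` as `Q x` times an
integral depending smoothly on `x`. -/
lemma exists_local_div (p q : ℕ) {U : Set (Idx p q → ℝ)} (hU : IsOpen U)
    {f : (Idx p q → ℝ) → ℝ} (hf : ContDiffOn ℝ ∞ f U)
    (hz : ∀ y ∈ U, QForm p q y = 0 → f y = 0) {y : Idx p q → ℝ} (hy : y ∈ U) (hy0 : y ≠ 0) :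
    ∃ s : Set (Idx p q → ℝ), IsOpen s ∧ y ∈ s ∧ s ⊆ U ∧ ∃ h : (Idx p q → ℝ) → ℝ,
      ContDiffOn ℝ ∞ h s ∧ ∀ x ∈ s, f x = QForm p q x * h x := by
  have hQc : ContDiff ℝ ∞ (QForm p q) := contDiff_QForm p q
  by_cases hQ : QForm p q y = 0
  swap
  · refine ⟨U ∩ {x | QForm p q x ≠ 0}, hU.inter (isOpen_ne_fun hQc.continuous continuous_const),
      ⟨hy, hQ⟩, inter_subset_left, fun x => f x / QForm p q x, ?_, ?_⟩
    · exact (hf.mono inter_subset_left).div hQc.contDiffOn fun x hx => hx.2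
    · rintro x ⟨-, hx⟩
      have : QForm p q x ≠ 0 := hx
      field_simp
  obtain ⟨v, hv, hb⟩ := exists_null_dir p q hy0
  have hBc : ContDiff ℝ ∞ (fun x => bilF p q x v) := contDiff_bilF p q v
  -- along the null direction `v`, `Q` is affine and its zero sits at time `τ x`
  set τ : (Idx p q → ℝ) → ℝ := fun x => -(QForm p q x) / (2 * bilF p q x v) with hτ
  have hτy : τ y = 0 := by simp [hτ, hQ]
  have hτc : ∀ x, bilF p q x v ≠ 0 → ContDiffAt ℝ ∞ τ x := fun x hx =>
    (hQc.neg.contDiffAt).div (contDiffAt_const.mul hBc.contDiffAt) (by simpa using hx)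
  obtain ⟨r, hr, hball⟩ := Metric.isOpen_iff.1 hU y hy
  have hev : ∀ᶠ x in 𝓝 y, bilF p q x v ≠ 0 ∧ ‖x - y‖ + 3 * (|τ x| * ‖v‖) < r := by
    refine (hBc.continuous.continuousAt.eventually_ne hb).and ?_
    have hc : ContinuousAt (fun x => ‖x - y‖ + 3 * (|τ x| * ‖v‖)) y := by
      have := (hτc y hb).continuousAt
      fun_prop
    refine hc.eventually_lt continuousAt_const ?_
    simpa [hτy] using hr
  obtain ⟨s, hs, hso, hys⟩ := eventually_nhds_iff.1 hev
  have hmem : ∀ x ∈ s, ∀ t : ℝ, |t| < 3 → x + (t * τ x) • v ∈ U := by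
    intro x hx t ht
    apply hball
    rw [mem_ball_iff_norm]
    calc ‖x + (t * τ x) • v - y‖ = ‖(x - y) + (t * τ x) • v‖ := by congr 1; abel
      _ ≤ ‖x - y‖ + ‖(t * τ x) • v‖ := norm_add_le _ _
      _ = ‖x - y‖ + |t| * (|τ x| * ‖v‖) := by rw [norm_smul, Real.norm_eq_abs, abs_mul, mul_assoc]
      _ ≤ ‖x - y‖ + 3 * (|τ x| * ‖v‖) := by gcongr
      _ < r := (hs x hx).2
  have hsU : s ⊆ U := fun x hx => by simpa using hmem x hx 0 (by simp)
  let F : (Idx p q → ℝ) × ℝ → ℝ := fun z => fderiv ℝ f (z.1 + (z.2 * τ z.1) • v) v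
  have hf' : ContDiffOn ℝ ∞ (fun x => fderiv ℝ f x v) U :=
    (hf.fderiv_of_isOpen hU (m := ∞) (by simp)).clm_apply contDiffOn_const
  have hF : ContDiffOn ℝ ∞ F (s ×ˢ Metric.ball (0 : ℝ) 3) := by
    rintro ⟨x, t⟩ ⟨hx, ht⟩
    have hx : x ∈ s := hx
    have ht : |t| < 3 := by simpa using ht
    apply ContDiffAt.contDiffWithinAt
    have h1 : ContDiffAt ℝ ∞ (fun z : (Idx p q → ℝ) × ℝ => τ z.1) (x, t) :=
      ContDiffAt.comp (g := τ) (x, t) (hτc x (hs x hx).1) contDiffAt_fst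
    have h2 : ContDiffAt ℝ ∞ (fun z : (Idx p q → ℝ) × ℝ => z.1 + (z.2 * τ z.1) • v) (x, t) :=
      contDiffAt_fst.add ((contDiffAt_snd.mul h1).smul contDiffAt_const)
    have h3 : ContDiffAt ℝ ∞ (fun x => fderiv ℝ f x v) (x + (t * τ x) • v) :=
      hf'.contDiffAt (hU.mem_nhds (hmem x hx t ht))
    exact ContDiffAt.comp (x, t) h3 h2
  refine ⟨s, hso, hys, hsU,
    fun x => (2 * bilF p q x v)⁻¹ * ∫ t in (0 : ℝ)..1, F (x, t), ?_, ?_⟩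
  · refine ContDiffOn.mul ?_ (contDiffOn_intervalIntegral_param hso hF)
    exact (contDiffOn_const.mul hBc.contDiffOn).inv fun x hx => by
      simpa using (hs x hx).1
  · intro x hx
    have hbx := (hs x hx).1
    have hzero : f (x + τ x • v) = 0 := by
      apply hz
      · simpa using hmem x hx 1 (by norm_num)
      · rw [QForm_add_smul, hv, hτ]; field_simp; ring
    have hint : ∫ t in (0 : ℝ)..1, τ x * F (x, t) = f (x + (1 * τ x) • v) - f (x + (0 * τ x) • v) := by
      apply intervalIntegral.integral_eq_sub_of_hasDerivAt
        (f := fun t : ℝ => f (x + (t * τ x) • v))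
      · intro t ht
        rw [uIcc_of_le zero_le_one] at ht
        have hxt := hmem x hx t (by rw [abs_lt]; constructor <;> linarith [ht.1, ht.2])
        have hd : HasFDerivAt f (fderiv ℝ f (x + (t * τ x) • v)) (x + (t * τ x) • v) :=
          ((hf.contDiffAt (hU.mem_nhds hxt)).differentiableAt (by simp)).hasFDerivAt
        have hl : HasDerivAt (fun t : ℝ => x + (t * τ x) • v) ((1 * τ x) • v) t :=
          (((hasDerivAt_id t).mul_const (τ x)).smul_const v).const_add x
        have := hd.comp_hasDerivAt t hl
        refine this.congr_deriv ?_
        simp [F]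
      · apply ContinuousOn.intervalIntegrable
        rw [uIcc_of_le zero_le_one]
        apply continuousOn_const.mul
        refine hF.continuousOn.comp (by fun_prop) ?_
        intro t ht
        refine ⟨hx, ?_⟩
        simp only [mem_ball_zero_iff, Real.norm_eq_abs, abs_lt]
        constructor <;> linarith [ht.1, ht.2]
    rw [one_mul, hzero, zero_mul, zero_smul, add_zero, intervalIntegral.integral_const_mul] at hint
    have h2 : f x = -(τ x * ∫ t in (0 : ℝ)..1, F (x, t)) := by linarith
    rw [h2, hτ]
    field_simp

/-- A smooth function vanishing on the null cone is `Q` times a smooth function: the local quotients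
of `exists_local_div` agree wherever two of them are defined, since `{Q ≠ 0}` is dense. -/
lemma exists_div (p q : ℕ) {U : Set (Idx p q → ℝ)} (hU : IsOpen U) (hU0 : ∀ x ∈ U, x ≠ 0)
    {f : (Idx p q → ℝ) → ℝ} (hf : ContDiffOn ℝ ∞ f U)
    (hz : ∀ y ∈ U, QForm p q y = 0 → f y = 0) :
    ∃ h : (Idx p q → ℝ) → ℝ, ContDiffOn ℝ ∞ h U ∧ ∀ x ∈ U, f x = QForm p q x * h x := by
  choose! s hso hys hsU h hh hfh using
    fun (y : Idx p q → ℝ) (hy : y ∈ U) => exists_local_div p q hU hf hz hy (hU0 y hy)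
  refine ⟨fun x => h x x, ?_, fun x hx => hfh x hx x (hys x hx)⟩
  intro y hy
  apply ContDiffAt.contDiffWithinAt
  refine ((hh y hy).contDiffAt ((hso y hy).mem_nhds (hys y hy))).congr_of_eventuallyEq ?_
  filter_upwards [(hso y hy).mem_nhds (hys y hy)] with x hx
  have hxU := hsU y hy hx
  have n1 := (hso y hy).mem_nhds hx
  have n2 := (hso x hxU).mem_nhds (hys x hxU)
  refine eq_of_eventually_eq_off (hU0 x hxU) ((hh x hxU).contDiffAt n2).continuousAt
    ((hh y hy).contDiffAt n1).continuousAt ?_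
  filter_upwards [n1, n2] with z hz1 hz2 hQ
  have h1 := hfh y hy z hz1
  rw [hfh x hxU z hz2] at h1
  exact mul_left_cancel₀ hQ h1

/-! ### Jets along the null cone -/

section Jets

variable {p q : ℕ} {U : Set (Idx p q → ℝ)}

/-- The factor `H` in `D(Q^{j+1} h) = Q^j H`. -/
def quotDeriv (p q : ℕ) {F : Type} [NormedAddCommGroup F] [NormedSpace ℝ F] (j : ℕ)
    (h : (Idx p q → ℝ) → F) (x : Idx p q → ℝ) : (Idx p q → ℝ) →L[ℝ] F :=
  ((j : ℝ) + 1) • (fderiv ℝ (QForm p q) x).smulRight (h x) + QForm p q x • fderiv ℝ h x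

lemma contDiffOn_quotDeriv {F : Type} [NormedAddCommGroup F] [NormedSpace ℝ F]
    (hU : IsOpen U) (j : ℕ) {h : (Idx p q → ℝ) → F} (hh : ContDiffOn ℝ ∞ h U) :
    ContDiffOn ℝ ∞ (quotDeriv p q j h) U := by
  have hQ : ContDiff ℝ ∞ (QForm p q) := contDiff_QForm p q
  have h1 : ContDiffOn ℝ ∞ (fun x => fderiv ℝ (QForm p q) x) U :=
    (hQ.fderiv_right (m := ∞) (by simp)).contDiffOn
  exact ((h1.smulRight hh).const_smul _).add
    (hQ.contDiffOn.smul (hh.fderiv_of_isOpen hU (by simp)))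

lemma fderiv_pow_smul {F : Type} [NormedAddCommGroup F] [NormedSpace ℝ F]
    (hU : IsOpen U) (j : ℕ) {h : (Idx p q → ℝ) → F} (hh : ContDiffOn ℝ ∞ h U)
    {x : Idx p q → ℝ} (hx : x ∈ U) :
    fderiv ℝ (fun x => QForm p q x ^ (j + 1) • h x) x
      = QForm p q x ^ j • quotDeriv p q j h x := by
  have hQ : DifferentiableAt ℝ (QForm p q) x :=
    ((contDiff_QForm p q (k := 1)).differentiable (by norm_num)) x
  have hd : DifferentiableAt ℝ h x :=
    (hh.contDiffAt (hU.mem_nhds hx)).differentiableAt (by simp)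
  rw [fderiv_fun_smul (hQ.fun_pow _) hd, fderiv_fun_pow _ hQ]
  ext v
  simp [quotDeriv, smul_smul, pow_succ]
  rw [add_comm]
  congr 2
  ring

/-- The `j`-th derivative of `Q^j h` detects the value of `h` on the null cone, because `dQ` does not
vanish there. -/
lemma eq_zero_of_iteratedFDeriv_pow_smul (hU : IsOpen U) (hU0 : ∀ x ∈ U, x ≠ 0) (j : ℕ) :
    ∀ {F : Type} [NormedAddCommGroup F] [NormedSpace ℝ F] {h : (Idx p q → ℝ) → F}
      (_ : ContDiffOn ℝ ∞ h U) {y : Idx p q → ℝ} (_ : y ∈ U) (_ : QForm p q y = 0)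
      (_ : iteratedFDeriv ℝ j (fun x => QForm p q x ^ j • h x) y = 0), h y = 0 := by
  induction j with
  | zero =>
    intro F _ _ h _ y _ _ h0
    have := congrArg (fun T => T 0) h0
    simpa using this
  | succ j ih =>
    intro F _ _ h hh y hy hQ h0
    rw [iteratedFDeriv_succ_eq_comp_right, Function.comp_apply,
      LinearIsometryEquiv.map_eq_zero_iff] at h0
    have hev : (fun x => fderiv ℝ (fun x => QForm p q x ^ (j + 1) • h x) x)
        =ᶠ[𝓝 y] fun x => QForm p q x ^ j • quotDeriv p q j h x := by
      filter_upwards [hU.mem_nhds hy] with x hx using fderiv_pow_smul hU j hh hx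
    rw [(hev.iteratedFDeriv ℝ j).eq_of_nhds] at h0
    have h1 := ih (contDiffOn_quotDeriv hU j hh) hy hQ h0
    obtain ⟨v, -, hb⟩ := exists_null_dir p q (hU0 y hy)
    have h2 := congrArg (fun T => T v) h1
    have hj : (j : ℝ) + 1 ≠ 0 := by positivity
    simpa [quotDeriv, hQ, fderiv_QForm_apply, hb, hj] using h2

/-- Derivatives of `Q^j h` of order below `j` vanish on the null cone. -/
lemma iteratedFDeriv_pow_smul_eq_zero (hU : IsOpen U) (k : ℕ) :
    ∀ (j : ℕ) (_ : k < j) {F : Type} [NormedAddCommGroup F] [NormedSpace ℝ F]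
      {h : (Idx p q → ℝ) → F}
      (_ : ContDiffOn ℝ ∞ h U) {y : Idx p q → ℝ} (_ : y ∈ U) (_ : QForm p q y = 0),
      iteratedFDeriv ℝ k (fun x => QForm p q x ^ j • h x) y = 0 := by
  induction k with
  | zero =>
    intro j hj F _ _ h _ y _ hQ
    ext m
    simp [hQ, hj.ne']
  | succ k ih =>
    intro j hj F _ _ h hh y hy hQ
    obtain ⟨j, rfl⟩ : ∃ i, j = i + 1 := ⟨j - 1, by omega⟩
    rw [iteratedFDeriv_succ_eq_comp_right, Function.comp_apply,
      LinearIsometryEquiv.map_eq_zero_iff]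
    have hev : (fun x => fderiv ℝ (fun x => QForm p q x ^ (j + 1) • h x) x)
        =ᶠ[𝓝 y] fun x => QForm p q x ^ j • quotDeriv p q j h x := by
      filter_upwards [hU.mem_nhds hy] with x hx using fderiv_pow_smul hU j hh hx
    rw [(hev.iteratedFDeriv ℝ k).eq_of_nhds]
    exact ih j (by omega) (contDiffOn_quotDeriv hU j hh) hy hQ

/-- `f` vanishes to infinite order along the null cone in `U`. -/
def FlatOn (p q : ℕ) (U : Set (Idx p q → ℝ)) (f : (Idx p q → ℝ) → ℝ) : Prop :=
  ∀ y ∈ U, QForm p q y = 0 → VanishesToInfOrderAt p q f y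

lemma FlatOn.congr (hU : IsOpen U) {f g : (Idx p q → ℝ) → ℝ} (hf : FlatOn p q U f)
    (h : ∀ x ∈ U, g x = f x) : FlatOn p q U g := by
  intro y hy hQ k
  have hev : g =ᶠ[𝓝 y] f := by
    filter_upwards [hU.mem_nhds hy] with x hx using h x hx
  rw [(hev.iteratedFDeriv ℝ k).eq_of_nhds]
  exact hf y hy hQ k

lemma FlatOn.sub (hU : IsOpen U) {f g : (Idx p q → ℝ) → ℝ} (hf : FlatOn p q U f)
    (hg : FlatOn p q U g) (hfs : ContDiffOn ℝ ∞ f U) (hgs : ContDiffOn ℝ ∞ g U) :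
    FlatOn p q U (fun x => f x - g x) := by
  intro y hy hQ k
  have hn := hU.mem_nhds hy
  have hk : ((k : ℕ) : WithTop ℕ∞) ≤ ∞ := by exact_mod_cast le_top
  have := iteratedFDeriv_sub_apply (((hfs.contDiffAt hn).of_le hk)) ((hgs.contDiffAt hn).of_le hk)
  rw [hf y hy hQ k, hg y hy hQ k, sub_zero] at this
  exact this

lemma FlatOn.const_mul (hU : IsOpen U) {f : (Idx p q → ℝ) → ℝ} (hf : FlatOn p q U f)
    (hfs : ContDiffOn ℝ ∞ f U) (c : ℝ) : FlatOn p q U (fun x => c * f x) := by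
  intro y hy hQ k
  have hk : ((k : ℕ) : WithTop ℕ∞) ≤ ∞ := by exact_mod_cast le_top
  have := iteratedFDeriv_const_smul_apply (a := c)
    ((hfs.contDiffAt (hU.mem_nhds hy)).of_le hk)
  rw [hf y hy hQ k, smul_zero] at this
  exact this

/-- If `Q^j h` is flat, then `h` vanishes on the null cone. -/
lemma FlatOn.eq_zero_of_pow_mul (hU : IsOpen U) (hU0 : ∀ x ∈ U, x ≠ 0) {j : ℕ}
    {h : (Idx p q → ℝ) → ℝ} (hh : ContDiffOn ℝ ∞ h U)
    (hf : FlatOn p q U fun x => QForm p q x ^ j * h x) :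
    ∀ y ∈ U, QForm p q y = 0 → h y = 0 := fun y hy hQ =>
  eq_zero_of_iteratedFDeriv_pow_smul hU hU0 j hh hy hQ (hf y hy hQ j)

/-- Divisibility by every power of `Q` forces flatness. -/
lemma flatOn_of_forall_dvd (hU : IsOpen U) {f : (Idx p q → ℝ) → ℝ}
    (h : ∀ j : ℕ, ∃ g, ContDiffOn ℝ ∞ g U ∧ ∀ x ∈ U, f x = QForm p q x ^ j * g x) :
    FlatOn p q U f := by
  intro y hy hQ k
  obtain ⟨g, hg, hfg⟩ := h (k + 1)
  have hev : f =ᶠ[𝓝 y] fun x => QForm p q x ^ (k + 1) • g x := by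
    filter_upwards [hU.mem_nhds hy] with x hx using hfg x hx
  rw [(hev.iteratedFDeriv ℝ k).eq_of_nhds]
  exact iteratedFDeriv_pow_smul_eq_zero hU k (k + 1) (by omega) hg hy hQ

/-- Powers of `Q` can be cancelled from flat functions: `h` is divisible by `Q` over and over. -/
lemma FlatOn.of_pow_mul (hU : IsOpen U) (hU0 : ∀ x ∈ U, x ≠ 0) {j : ℕ}
    {h : (Idx p q → ℝ) → ℝ} (hh : ContDiffOn ℝ ∞ h U)
    (hf : FlatOn p q U fun x => QForm p q x ^ j * h x) : FlatOn p q U h := by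
  refine flatOn_of_forall_dvd hU fun i => ?_
  induction i with
  | zero => exact ⟨h, hh, fun x _ => by simp⟩
  | succ i ih =>
    obtain ⟨g, hg, hhg⟩ := ih
    have h0 : FlatOn p q U fun x => QForm p q x ^ (j + i) * g x :=
      hf.congr hU fun x hx => by rw [hhg x hx]; ring
    obtain ⟨g', hg', hgg⟩ := exists_div p q hU hU0 hg (h0.eq_zero_of_pow_mul hU hU0 hg)
    exact ⟨g', hg', fun x hx => by rw [hhg x hx, hgg x hx]; ring⟩

end Jets

/-! ### The Laplacian and the Euler operator -/

section Laplacian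

variable {p q : ℕ} {U : Set (Idx p q → ℝ)}

lemma htMat_mul_self (p q : ℕ) : htMat p q * htMat p q = 1 := by
  ext I J
  rw [Matrix.mul_apply]
  rcases I with ⟨⟩ | i | ⟨⟩ <;> rcases J with ⟨⟩ | j | ⟨⟩ <;>
    simp [htMat, hMat, Matrix.diagonal_apply, Matrix.one_apply]
  by_cases h : i = j
  · subst h; split_ifs <;> norm_num
  · simp [h]

lemma htMat_inv (p q : ℕ) : (htMat p q)⁻¹ = htMat p q :=
  Matrix.inv_eq_left_inv (htMat_mul_self p q)

lemma laplt_eq (p q : ℕ) (f : (Idx p q → ℝ) → ℝ) (x : Idx p q → ℝ) :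
    laplt p q f x = ∑ I, ∑ J, htMat p q I J * pderiv p q I (pderiv p q J f) x := by
  rw [laplt, htMat_inv]

lemma contDiffOn_pderiv (hU : IsOpen U) (I : Idx p q) {f : (Idx p q → ℝ) → ℝ}
    (hf : ContDiffOn ℝ ∞ f U) : ContDiffOn ℝ ∞ (pderiv p q I f) U :=
  (hf.fderiv_of_isOpen hU (m := ∞) (by simp)).clm_apply contDiffOn_const

lemma contDiffOn_laplt (hU : IsOpen U) {f : (Idx p q → ℝ) → ℝ}
    (hf : ContDiffOn ℝ ∞ f U) : ContDiffOn ℝ ∞ (laplt p q f) U :=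
  ContDiffOn.sum fun I _ => ContDiffOn.sum fun J _ =>
    contDiffOn_const.mul (contDiffOn_pderiv hU I (contDiffOn_pderiv hU J hf))

lemma contDiffOn_euler (hU : IsOpen U) {f : (Idx p q → ℝ) → ℝ}
    (hf : ContDiffOn ℝ ∞ f U) : ContDiffOn ℝ ∞ (euler p q f) U :=
  ContDiffOn.sum fun I _ => (contDiff_apply ℝ ℝ I).contDiffOn.mul (contDiffOn_pderiv hU I hf)

lemma pderiv_congr (hU : IsOpen U) (I : Idx p q) {f g : (Idx p q → ℝ) → ℝ}
    (h : ∀ x ∈ U, f x = g x) : ∀ x ∈ U, pderiv p q I f x = pderiv p q I g x := by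
  intro x hx
  have hev : f =ᶠ[𝓝 x] g := by
    filter_upwards [hU.mem_nhds hx] with z hz using h z hz
  rw [pderiv, pderiv, hev.fderiv_eq]

lemma laplt_congr (hU : IsOpen U) {f g : (Idx p q → ℝ) → ℝ}
    (h : ∀ x ∈ U, f x = g x) : ∀ x ∈ U, laplt p q f x = laplt p q g x := by
  intro x hx
  simp only [laplt, fun I J => pderiv_congr hU I (pderiv_congr hU J h) x hx]

lemma euler_congr (hU : IsOpen U) {f g : (Idx p q → ℝ) → ℝ}
    (h : ∀ x ∈ U, f x = g x) : ∀ x ∈ U, euler p q f x = euler p q g x := by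
  intro x hx
  simp only [euler, fun I => pderiv_congr hU I h x hx]

lemma differentiableAt_of_mem (hU : IsOpen U) {f : (Idx p q → ℝ) → ℝ}
    (hf : ContDiffOn ℝ ∞ f U) {x : Idx p q → ℝ} (hx : x ∈ U) : DifferentiableAt ℝ f x :=
  (hf.contDiffAt (hU.mem_nhds hx)).differentiableAt (by simp)

lemma pderiv_sub (hU : IsOpen U) (I : Idx p q) {f g : (Idx p q → ℝ) → ℝ}
    (hf : ContDiffOn ℝ ∞ f U) (hg : ContDiffOn ℝ ∞ g U) : ∀ x ∈ U,
    pderiv p q I (fun x => f x - g x) x = pderiv p q I f x - pderiv p q I g x := by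
  intro x hx
  simp only [pderiv]
  rw [fderiv_fun_sub (differentiableAt_of_mem hU hf hx) (differentiableAt_of_mem hU hg hx)]
  simp

lemma laplt_sub (hU : IsOpen U) {f g : (Idx p q → ℝ) → ℝ}
    (hf : ContDiffOn ℝ ∞ f U) (hg : ContDiffOn ℝ ∞ g U) : ∀ x ∈ U,
    laplt p q (fun x => f x - g x) x = laplt p q f x - laplt p q g x := by
  intro x hx
  have h : ∀ I J, pderiv p q I (pderiv p q J (fun x => f x - g x)) x
      = pderiv p q I (pderiv p q J f) x - pderiv p q I (pderiv p q J g) x := fun I J => by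
    rw [pderiv_congr hU I (pderiv_sub hU J hf hg) x hx,
      pderiv_sub hU I (contDiffOn_pderiv hU J hf) (contDiffOn_pderiv hU J hg) x hx]
  simp only [laplt, h, mul_sub, Finset.sum_sub_distrib]

lemma euler_sub (hU : IsOpen U) {f g : (Idx p q → ℝ) → ℝ}
    (hf : ContDiffOn ℝ ∞ f U) (hg : ContDiffOn ℝ ∞ g U) : ∀ x ∈ U,
    euler p q (fun x => f x - g x) x = euler p q f x - euler p q g x := by
  intro x hx
  simp only [euler, fun I => pderiv_sub hU I hf hg x hx, mul_sub, Finset.sum_sub_distrib]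

lemma pderiv_mul {a b : (Idx p q → ℝ) → ℝ} {x : Idx p q → ℝ} (I : Idx p q)
    (ha : DifferentiableAt ℝ a x) (hb : DifferentiableAt ℝ b x) :
    pderiv p q I (fun x => a x * b x) x = a x * pderiv p q I b x + pderiv p q I a x * b x := by
  simp only [pderiv]
  rw [fderiv_fun_mul ha hb]
  simp [mul_comm]

/-- The lowered coordinate `x_J = Σ h̃_{KJ} x^K`. -/
def lowC (p q : ℕ) (J : Idx p q) (x : Idx p q → ℝ) : ℝ := bilF p q x (Pi.single J 1)

lemma lowC_eq (p q : ℕ) (J : Idx p q) (x : Idx p q → ℝ) :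
    lowC p q J x = ∑ K, htMat p q K J * x K := by
  simp [lowC, bilF, Pi.single_apply]

lemma contDiff_lowC (p q : ℕ) (J : Idx p q) {k : WithTop ℕ∞} : ContDiff ℝ k (lowC p q J) :=
  contDiff_bilF p q _

lemma pderiv_lowC (p q : ℕ) (I J : Idx p q) (x : Idx p q → ℝ) :
    pderiv p q I (lowC p q J) x = htMat p q I J := by
  have : HasFDerivAt (lowC p q J)
      (∑ K, (htMat p q K J) • ContinuousLinearMap.proj (R := ℝ) (φ := fun _ : Idx p q => ℝ) K) x := by
    have h : lowC p q J = fun x => ∑ K, htMat p q K J * x K := funext (lowC_eq p q J)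
    rw [h]
    exact HasFDerivAt.fun_sum fun K _ => (hasFDerivAt_apply K x).const_mul _
  rw [pderiv, this.fderiv, _root_.sum_apply, Finset.sum_eq_single I]
  · simp
  · intro K _ hK
    simp [hK]
  · simp

lemma pderiv_Q_mul (hU : IsOpen U) (J : Idx p q) {g : (Idx p q → ℝ) → ℝ}
    (hg : ContDiffOn ℝ ∞ g U) : ∀ x ∈ U, pderiv p q J (fun x => QForm p q x * g x) x
      = QForm p q x * pderiv p q J g x + 2 * lowC p q J x * g x := by
  intro x hx
  rw [pderiv_mul J (differentiableAt_of_mem hU (contDiff_QForm p q).contDiffOn hx)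
    (differentiableAt_of_mem hU hg hx)]
  rw [pderiv, pderiv, fderiv_QForm_apply, lowC]

lemma sum_mul_lowC (p q : ℕ) (x : Idx p q → ℝ) : ∑ I, x I * lowC p q I x = QForm p q x := by
  simp only [lowC_eq, Finset.mul_sum]
  rw [Finset.sum_comm, QForm]
  refine Finset.sum_congr rfl fun I _ => Finset.sum_congr rfl fun J _ => ?_
  ring

/-- `Q` is homogeneous of degree two: `X(Qg) = Q Xg + 2 Q g`. -/
lemma euler_Q_mul (hU : IsOpen U) {g : (Idx p q → ℝ) → ℝ}
    (hg : ContDiffOn ℝ ∞ g U) : ∀ x ∈ U, euler p q (fun x => QForm p q x * g x) x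
      = QForm p q x * euler p q g x + 2 * QForm p q x * g x := by
  intro x hx
  simp only [euler, fun I => pderiv_Q_mul hU I hg x hx, mul_add, Finset.sum_add_distrib]
  rw [Finset.mul_sum, ← sum_mul_lowC p q x, Finset.mul_sum, Finset.sum_mul]
  congr 1
  · exact Finset.sum_congr rfl fun I _ => by ring
  · exact Finset.sum_congr rfl fun I _ => by ring

lemma htMat_symm (p q : ℕ) (I J : Idx p q) : htMat p q I J = htMat p q J I := by
  rcases I with ⟨⟩ | i | ⟨⟩ <;> rcases J with ⟨⟩ | j | ⟨⟩ <;>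
    simp only [htMat, Matrix.of_apply, hMat, Matrix.diagonal_apply]
  by_cases h : i = j
  · subst h; rfl
  · simp [h, Ne.symm h]

lemma sum_htMat_mul_lowC (p q : ℕ) (I : Idx p q) (x : Idx p q → ℝ) :
    ∑ J, htMat p q I J * lowC p q J x = x I := by
  have h := congrArg (fun M => (M *ᵥ x) I) (htMat_mul_self p q)
  simp only [← Matrix.mulVec_mulVec, Matrix.one_mulVec] at h
  rw [← h]
  simp only [Matrix.mulVec, dotProduct, lowC_eq]
  refine Finset.sum_congr rfl fun J _ => ?_
  rw [htMat_symm p q I J]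
  congr 1
  exact Finset.sum_congr rfl fun K _ => by rw [htMat_symm]

lemma sum_htMat_sq (p q : ℕ) : ∑ I, ∑ J, htMat p q I J * htMat p q I J = (p + q : ℝ) + 2 := by
  have h : ∀ I, ∑ J, htMat p q I J * htMat p q I J = 1 := fun I => by
    have := congrFun (congrFun (htMat_mul_self p q) I) I
    rw [Matrix.mul_apply, Matrix.one_apply_eq] at this
    rw [← this]
    exact Finset.sum_congr rfl fun J _ => by rw [htMat_symm p q J I]
  simp [h]
  ring

/-- The commutator identity `[Δ̃, Q] = 4X + 2(n+2)`. -/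
lemma laplt_Q_mul (hU : IsOpen U) {g : (Idx p q → ℝ) → ℝ}
    (hg : ContDiffOn ℝ ∞ g U) : ∀ x ∈ U, laplt p q (fun x => QForm p q x * g x) x
      = QForm p q x * laplt p q g x + 4 * euler p q g x + 2 * ((p + q : ℝ) + 2) * g x := by
  intro x hx
  have hgd := differentiableAt_of_mem hU hg hx
  have h2 : ∀ I J, pderiv p q I (pderiv p q J (fun x => QForm p q x * g x)) x
      = QForm p q x * pderiv p q I (pderiv p q J g) x + 2 * lowC p q I x * pderiv p q J g x
        + 2 * lowC p q J x * pderiv p q I g x + 2 * htMat p q I J * g x := fun I J => by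
    have hQg : ContDiffOn ℝ ∞ (fun x => QForm p q x * pderiv p q J g x) U :=
      (contDiff_QForm p q).contDiffOn.mul (contDiffOn_pderiv hU J hg)
    have hl : DifferentiableAt ℝ (lowC p q J) x :=
      ((contDiff_lowC p q J (k := 1)).differentiable (by norm_num)) x
    rw [pderiv_congr hU I (pderiv_Q_mul hU J hg) x hx]
    have e : pderiv p q I (fun x => QForm p q x * pderiv p q J g x + 2 * lowC p q J x * g x) x
        = pderiv p q I (fun x => QForm p q x * pderiv p q J g x) x
          + pderiv p q I (fun x => 2 * lowC p q J x * g x) x := by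
      unfold pderiv at hQg ⊢
      rw [fderiv_fun_add (differentiableAt_of_mem hU hQg hx) ((hl.const_mul 2).fun_mul hgd)]
      rfl
    have e2 : pderiv p q I (fun x => 2 * lowC p q J x) x = 2 * htMat p q I J := by
      rw [← pderiv_lowC p q I J x]
      simp only [pderiv]
      rw [fderiv_const_mul hl]
      simp
    rw [e, pderiv_Q_mul hU I (contDiffOn_pderiv hU J hg) x hx,
      pderiv_mul I (hl.const_mul 2) hgd, e2]
    ring
  have hA : ∑ I, ∑ J, htMat p q I J * (lowC p q J x * pderiv p q I g x) = euler p q g x := by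
    refine Finset.sum_congr rfl fun I _ => ?_
    simp only [← mul_assoc]
    rw [← Finset.sum_mul, sum_htMat_mul_lowC]
  have hB : ∑ I, ∑ J, htMat p q I J * (lowC p q I x * pderiv p q J g x) = euler p q g x := by
    rw [← hA, Finset.sum_comm]
    refine Finset.sum_congr rfl fun I _ => Finset.sum_congr rfl fun J _ => ?_
    rw [htMat_symm]
  rw [laplt_eq, laplt_eq, ← sum_htMat_sq]
  have hsplit : ∀ I J, htMat p q I J * pderiv p q I (pderiv p q J (fun x => QForm p q x * g x)) x
      = QForm p q x * (htMat p q I J * pderiv p q I (pderiv p q J g) x)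
        + 2 * (htMat p q I J * (lowC p q I x * pderiv p q J g x))
        + 2 * (htMat p q I J * (lowC p q J x * pderiv p q I g x))
        + 2 * g x * (htMat p q I J * htMat p q I J) := fun I J => by rw [h2]; ring
  simp only [hsplit, Finset.sum_add_distrib, ← Finset.mul_sum]
  rw [hA, hB]
  ring

/-- `Δ̃(Q^k g)` for `g` homogeneous of degree `b`. For `k = 0` the last term is zero whatever the
truncated exponent `k - 1` is. -/
lemma laplt_pow_mul (hU : IsOpen U) (k : ℕ) : ∀ {g : (Idx p q → ℝ) → ℝ} {b : ℝ}
    (_ : ContDiffOn ℝ ∞ g U) (_ : ∀ x ∈ U, euler p q g x = b * g x),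
    ∀ x ∈ U, laplt p q (fun x => QForm p q x ^ k * g x) x
      = QForm p q x ^ k * laplt p q g x
        + 4 * k * (b + (p + q : ℝ) / 2 + k) * QForm p q x ^ (k - 1) * g x := by
  induction k with
  | zero => intro g b _ _ x hx; simp
  | succ k ih =>
    intro g b hg hb x hx
    have hQg : ContDiffOn ℝ ∞ (fun x => QForm p q x * g x) U :=
      (contDiff_QForm p q).contDiffOn.mul hg
    have h1 := ih (b := b + 2) hQg (fun z hz => by
      rw [euler_Q_mul hU hg z hz, hb z hz]; ring) x hx
    have h0 : (fun x => QForm p q x ^ (k + 1) * g x)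
        = fun x => QForm p q x ^ k * (QForm p q x * g x) := by
      funext z; ring
    rw [h0, h1, laplt_Q_mul hU hg x hx, hb x hx]
    rcases k with _ | k
    · simp; ring
    · simp only [Nat.add_sub_cancel]; push_cast; ring

end Laplacian

/-! ### Order-by-order division and uniqueness -/

/-- Order-by-order division: a homogeneous `f` vanishing on the null cone with
`Δ̃f ≡ -Q^{K-1} r` to infinite order is divisible by `Q^K`, as long as the indicial factors
`a + n/2 - k`, `1 ≤ k < K`, do not vanish. -/
lemma exists_pow_div {p q : ℕ} {U : Set (Idx p q → ℝ)} (hU : IsOpen U) (hU0 : ∀ x ∈ U, x ≠ 0)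
    {f r : (Idx p q → ℝ) → ℝ} {a : ℝ} (hf : ContDiffOn ℝ ∞ f U) (hr : ContDiffOn ℝ ∞ r U)
    (ha : ∀ x ∈ U, euler p q f x = a * f x) (hz : ∀ y ∈ U, QForm p q y = 0 → f y = 0) (K : ℕ)
    (hK : ∀ k : ℕ, 1 ≤ k → k < K → a + (p + q : ℝ) / 2 - k ≠ 0)
    (hflat : FlatOn p q U fun x => laplt p q f x + QForm p q x ^ (K - 1) * r x) :
    ∀ k ≤ K, ∃ g, ContDiffOn ℝ ∞ g U ∧ (∀ x ∈ U, euler p q g x = (a - 2 * k) * g x) ∧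
      ∀ x ∈ U, f x = QForm p q x ^ k * g x := by
  have hQc : ContDiffOn ℝ ∞ (QForm p q) U := (contDiff_QForm p q).contDiffOn
  intro k
  induction k with
  | zero => exact fun _ => ⟨f, hf, by simpa using ha, by simp⟩
  | succ k ih =>
    intro hk
    obtain ⟨g, hg, hgh, hfg⟩ := ih (by omega)
    have hg0 : ∀ y ∈ U, QForm p q y = 0 → g y = 0 := by
      rcases k with _ | k
      · intro y hy hQ
        rw [← hz y hy hQ, hfg y hy]; simp
      obtain ⟨d, rfl⟩ : ∃ d, K = k + 2 + d := ⟨K - (k + 2), by omega⟩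
      set c : ℝ := 4 * ((k + 1 : ℕ) : ℝ) * (a + (p + q : ℝ) / 2 - ((k + 1 : ℕ) : ℝ)) with hc
      have hc0 : c ≠ 0 := mul_ne_zero (by positivity) (hK (k + 1) (by omega) (by omega))
      let h : (Idx p q → ℝ) → ℝ := fun x =>
        QForm p q x * laplt p q g x + c * g x + QForm p q x ^ (d + 1) * r x
      have hh : ContDiffOn ℝ ∞ h U :=
        ((hQc.mul (contDiffOn_laplt hU hg)).add (contDiffOn_const.mul hg)).add
          ((hQc.pow _).mul hr)
      have hfl : FlatOn p q U fun x => QForm p q x ^ k * h x := by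
        refine hflat.congr hU fun x hx => ?_
        rw [laplt_congr hU hfg x hx, laplt_pow_mul hU (k + 1) hg hgh x hx]
        have e : k + 2 + d - 1 = k + (d + 1) := by omega
        rw [e]
        simp only [h, hc, Nat.add_sub_cancel]
        ring
      intro y hy hQ
      have := hfl.eq_zero_of_pow_mul hU hU0 hh y hy hQ
      simpa [h, hQ, hc0] using this
    obtain ⟨g', hg', hgg⟩ := exists_div p q hU hU0 hg hg0
    refine ⟨g', hg', ?_, fun x hx => by rw [hfg x hx, hgg x hx]; ring⟩
    intro x hx
    have hc := contDiffOn_euler hU hg'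
    refine eq_of_eventually_eq_off (f := euler p q g')
      (g := fun x => (a - 2 * ((k + 1 : ℕ) : ℝ)) * g' x) (hU0 x hx)
      (hc.continuousOn.continuousAt (hU.mem_nhds hx))
      ((hg'.continuousOn.continuousAt (hU.mem_nhds hx)).const_mul _) ?_
    filter_upwards [hU.mem_nhds hx] with z hz' hQ
    have h1 := hgh z hz'
    rw [euler_congr hU hgg z hz', euler_Q_mul hU hg' z hz', hgg z hz'] at h1
    apply mul_left_cancel₀ hQ
    push_cast
    linear_combination h1

end

/-- Uniqueness in the obstructed case `w = m - n/2`: the log coefficient `l̃` is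
unique to infinite order along the null cone, and the smooth part `s̃` is unique
modulo `Q^m` times a homogeneous harmonic jet. -/
theorem statement15 (p q : ℕ) (hn : 3 ≤ p + q)
    (m : ℕ) (hm : 1 ≤ m)
    (U : Set (Idx p q → ℝ)) (hU : IsOpenCone p q U)
    (st lt st' lt' : (Idx p q → ℝ) → ℝ)
    (hst : ContDiffOn ℝ (⊤ : ℕ∞) st U) (hlt : ContDiffOn ℝ (⊤ : ℕ∞) lt U)
    (hst' : ContDiffOn ℝ (⊤ : ℕ∞) st' U) (hlt' : ContDiffOn ℝ (⊤ : ℕ∞) lt' U)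
    (hshom : ∀ x ∈ U, euler p q st x = ((m : ℝ) - (p + q : ℝ) / 2) * st x)
    (hshom' : ∀ x ∈ U, euler p q st' x = ((m : ℝ) - (p + q : ℝ) / 2) * st' x)
    (hlhom : ∀ x ∈ U, euler p q lt x
        = (((m : ℝ) - (p + q : ℝ) / 2) - 2 * (m : ℝ)) * lt x)
    (hlhom' : ∀ x ∈ U, euler p q lt' x
        = (((m : ℝ) - (p + q : ℝ) / 2) - 2 * (m : ℝ)) * lt' x)
    (hagree : ∀ y ∈ nullCone p q ∩ U, st y = st' y)
    (hlharm : ∀ y ∈ nullCone p q ∩ U, VanishesToInfOrderAt p q (laplt p q lt) y)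
    (hlharm' : ∀ y ∈ nullCone p q ∩ U, VanishesToInfOrderAt p q (laplt p q lt') y)
    (hsys : ∀ y ∈ nullCone p q ∩ U,
      VanishesToInfOrderAt p q
        (fun x => laplt p q st x + 4 * (m : ℝ) * QForm p q x ^ (m - 1) * lt x) y)
    (hsys' : ∀ y ∈ nullCone p q ∩ U,
      VanishesToInfOrderAt p q
        (fun x => laplt p q st' x + 4 * (m : ℝ) * QForm p q x ^ (m - 1) * lt' x) y) :
    (∀ y ∈ nullCone p q ∩ U,
      VanishesToInfOrderAt p q (fun x => lt x - lt' x) y) ∧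
    ∃ g : (Idx p q → ℝ) → ℝ,
      ContDiffOn ℝ (⊤ : ℕ∞) g U ∧
      (∀ x ∈ U, euler p q g x
          = (((m : ℝ) - (p + q : ℝ) / 2) - 2 * (m : ℝ)) * g x) ∧
      (∀ y ∈ nullCone p q ∩ U, VanishesToInfOrderAt p q (laplt p q g) y) ∧
      (∀ y ∈ nullCone p q ∩ U,
        VanishesToInfOrderAt p q
          (fun x => st x - st' x - QForm p q x ^ m * g x) y) := by
  obtain ⟨hUo, hU0, -⟩ := hU
  have hQc : ContDiffOn ℝ ((⊤ : ℕ∞) : WithTop ℕ∞) (QForm p q) U :=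
    (contDiff_QForm p q).contDiffOn
  have flat : ∀ {f : (Idx p q → ℝ) → ℝ},
      (∀ y ∈ nullCone p q ∩ U, VanishesToInfOrderAt p q f y) → FlatOn p q U f :=
    fun h y hy hQ => h y ⟨⟨hU0 y hy, hQ⟩, hy⟩
  have unflat : ∀ {f : (Idx p q → ℝ) → ℝ}, FlatOn p q U f →
      (∀ y ∈ nullCone p q ∩ U, VanishesToInfOrderAt p q f y) :=
    fun h y hy => h y hy.2 hy.1.2
  have hm0 : (m : ℝ) ≠ 0 := by positivity
  -- the differences of the two solutions
  let f : (Idx p q → ℝ) → ℝ := fun x => st x - st' x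
  let l : (Idx p q → ℝ) → ℝ := fun x => lt x - lt' x
  have hf := hst.sub hst'
  have hl := hlt.sub hlt'
  change ContDiffOn ℝ _ f U at hf
  change ContDiffOn ℝ _ l U at hl
  have hfe : ∀ x ∈ U, euler p q f x = ((m : ℝ) - (p + q : ℝ) / 2) * f x := fun x hx => by
    rw [euler_sub hUo hst hst' x hx, hshom x hx, hshom' x hx]; ring
  have hle : ∀ x ∈ U, euler p q l x
      = (((m : ℝ) - (p + q : ℝ) / 2) - 2 * (m : ℝ)) * l x := fun x hx => by
    rw [euler_sub hUo hlt hlt' x hx, hlhom x hx, hlhom' x hx]; ring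
  have hf0 : ∀ y ∈ U, QForm p q y = 0 → f y = 0 := fun y hy hQ =>
    sub_eq_zero.2 (hagree y ⟨⟨hU0 y hy, hQ⟩, hy⟩)
  have hlflat : FlatOn p q U (laplt p q l) :=
    ((flat hlharm).sub hUo (flat hlharm') (contDiffOn_laplt hUo hlt)
      (contDiffOn_laplt hUo hlt')).congr hUo (laplt_sub hUo hlt hlt')
  have hsmooth : ∀ {s t : (Idx p q → ℝ) → ℝ}, ContDiffOn ℝ ((⊤ : ℕ∞) : WithTop ℕ∞) s U →
      ContDiffOn ℝ ((⊤ : ℕ∞) : WithTop ℕ∞) t U → ContDiffOn ℝ ((⊤ : ℕ∞) : WithTop ℕ∞)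
        (fun x => laplt p q s x + 4 * (m : ℝ) * QForm p q x ^ (m - 1) * t x) U := fun hs ht =>
    (contDiffOn_laplt hUo hs).add ((contDiffOn_const.mul (hQc.pow _)).mul ht)
  have hfflat : FlatOn p q U
      fun x => laplt p q f x + QForm p q x ^ (m - 1) * (4 * (m : ℝ) * l x) :=
    ((flat hsys).sub hUo (flat hsys') (hsmooth hst hlt) (hsmooth hst' hlt')).congr hUo
      fun x hx => by rw [laplt_sub hUo hst hst' x hx]; simp only [l]; ring
  -- `f = Q^m g`
  obtain ⟨g, hg, hge, hfg⟩ := exists_pow_div hUo hU0 hf (contDiffOn_const.mul hl) hfe hf0 m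
    (fun k _ hk => by
      have : (k : ℝ) < m := by exact_mod_cast hk
      have h : (m : ℝ) - (p + q : ℝ) / 2 + (p + q : ℝ) / 2 - k = m - k := by ring
      rw [h]; exact (sub_pos.2 this).ne') hfflat m le_rfl
  -- the indicial factor vanishes at `k = m`, which leaves `Q Δ̃g + 4 m l` flat
  let r : (Idx p q → ℝ) → ℝ := fun x => QForm p q x * laplt p q g x + 4 * (m : ℝ) * l x
  have hr : ContDiffOn ℝ ((⊤ : ℕ∞) : WithTop ℕ∞) r U :=
    (hQc.mul (contDiffOn_laplt hUo hg)).add (contDiffOn_const.mul hl)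
  have hrflat' : FlatOn p q U fun x => QForm p q x ^ (m - 1) * r x :=
    hfflat.congr hUo fun x hx => by
      rw [laplt_congr hUo hfg x hx, laplt_pow_mul hUo m hg hge x hx]
      obtain ⟨j, rfl⟩ : ∃ j, m = j + 1 := ⟨m - 1, by omega⟩
      simp only [r, Nat.add_sub_cancel]
      ring
  have hrflat : FlatOn p q U r := hrflat'.of_pow_mul hUo hU0 hr
  have hl0 : ∀ y ∈ U, QForm p q y = 0 → l y = 0 := fun y hy hQ => by
    have := hrflat'.eq_zero_of_pow_mul hUo hU0 hr y hy hQ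
    simpa [r, hQ, hm0] using this
  -- for the degree of `l` the indicial factors are `-(m + k)`, so `l` is divisible by all powers
  have hlinf : FlatOn p q U l := flatOn_of_forall_dvd hUo fun K => by
    obtain ⟨b, hb, -, hlb⟩ := exists_pow_div hUo hU0 hl (contDiffOn_const (c := (0 : ℝ))) hle hl0 K
      (fun k _ _ => by
        have h : (m : ℝ) - (p + q : ℝ) / 2 - 2 * m + (p + q : ℝ) / 2 - k = -(m + k) := by ring
        rw [h, neg_ne_zero]; positivity)
      (hlflat.congr hUo fun x _ => by simp) K le_rfl
    exact ⟨b, hb, hlb⟩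
  have hgflat : FlatOn p q U (laplt p q g) := by
    refine FlatOn.of_pow_mul hUo hU0 (j := 1) (contDiffOn_laplt hUo hg) ?_
    refine (hrflat.sub hUo (hlinf.const_mul hUo hl (4 * (m : ℝ))) hr
      (contDiffOn_const.mul hl)).congr hUo fun x _ => ?_
    simp only [r]; ring
  refine ⟨unflat hlinf, g, hg, hge, unflat hgflat, unflat ?_⟩
  refine flatOn_of_forall_dvd hUo fun j => ⟨fun _ => 0, contDiffOn_const, fun x hx => ?_⟩
  have := hfg x hx
  simp only [f] at this
  rw [this]; ring
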